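/- Let p be a prime and let G be the underlying additive group of ℤ[1/p] (the localization of the ring ℤ away from p), i.e., the group of p-adic fractions m/p^j under addition. Then for every integer k ≥ 2, the group cohomology H^k(G, U(1)) with U(1) as a trivial G-module vanishes. -/

import Mathlib

/-- The additive group `ℤ[1/p]` of `p`-adic fractions, written multiplicatively so that it can
be used as the group in group cohomology. -/
abbrev PadicFractions (p : ℕ) : Type :=
  Multiplicative (Localization.Away (p : ℤ))

/-!
An infinite cyclic group `⟨g⟩` has the free resolution `0 ⟶ k[G] ⟶ k[G] ⟶ k` with maps `g - 1`
and the augmentation, so its homology vanishes in degrees `≥ 2`. A chain involves only finitely many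
group elements, so the homology of a group vanishes as soon as that of its finitely generated
subgroups does; those of `ℤ[1/p]` are cyclic, by clearing denominators. Finally, if `H_n(G, k) = 0`
and `M` is an injective `k`-module, then a cocycle `Cₙ ⟶ M` vanishes on cycles, hence factors
through the image of the differential `Cₙ ⟶ Cₙ₋₁`, and by injectivity extends to `Cₙ₋₁`.
-/

open CategoryTheory Limits

universe u

section TwoTermResolution
open HomologicalComplex

variable {C : Type*} [Category* C] [Abelian C]

/-- The chain complex `⋯ ⟶ 0 ⟶ X₁ ⟶ X₂` with `X₂` in degree `0`. -/
noncomputable abbrev twoTermComplex {X₁ X₂ : C} (f : X₁ ⟶ X₂) : ChainComplex C ℕ :=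
  double f (ComplexShape.down_mk 1 0 rfl)

lemma isZero_twoTermComplex_X {X₁ X₂ : C} (f : X₁ ⟶ X₂) (n : ℕ) :
    IsZero ((twoTermComplex f).X (n + 2)) :=
  isZero_double_X f _ _ (by simp) (by simp)

lemma twoTermComplex_d {X₁ X₂ : C} (f : X₁ ⟶ X₂) :
    (twoTermComplex f).d 1 0 =
      (doubleXIso₀ f _).hom ≫ f ≫ (doubleXIso₁ f _ one_ne_zero).inv :=
  double_d f _ one_ne_zero

/-- The chain map from `⋯ ⟶ 0 ⟶ X₁ ⟶ X₂` to `X₃`, placed in degree `0`, induced by a short complex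
`X₁ ⟶ X₂ ⟶ X₃`. -/
noncomputable def twoTermComplexAugmentation (S : ShortComplex C) :
    twoTermComplex S.f ⟶ (ChainComplex.single₀ C).obj S.X₃ :=
  (ChainComplex.toSingle₀Equiv _ _).symm ⟨(doubleXIso₁ S.f _ one_ne_zero).hom ≫ S.g, by
    simp [twoTermComplex_d]⟩

lemma twoTermComplexAugmentation_f_zero (S : ShortComplex C) :
    (twoTermComplexAugmentation S).f 0 = (doubleXIso₁ S.f _ one_ne_zero).hom ≫ S.g :=
  ChainComplex.toSingle₀Equiv_symm_apply_f_zero _ _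

lemma twoTermComplex_d_comp_augmentation (S : ShortComplex C) :
    (twoTermComplex S.f).d 1 0 ≫ (twoTermComplexAugmentation S).f 0 = 0 := by
  rw [← (twoTermComplexAugmentation S).comm, single_obj_d, comp_zero]

/-- The identification of the augmented two-term complex of a short complex with the short complex
itself. -/
noncomputable def twoTermComplexIso (S : ShortComplex C) :
    ShortComplex.mk _ _ (twoTermComplex_d_comp_augmentation S) ≅ S :=
  ShortComplex.isoMk (doubleXIso₀ S.f (ComplexShape.down_mk 1 0 rfl))
    (doubleXIso₁ S.f (ComplexShape.down_mk 1 0 rfl) one_ne_zero) (Iso.refl _)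
    (by simp [twoTermComplex_d])
    ((twoTermComplexAugmentation_f_zero S).symm.trans (Category.comp_id _).symm)

variable {S : ShortComplex C}

lemma quasiIso_twoTermComplexAugmentation (hS : S.ShortExact) :
    QuasiIso (twoTermComplexAugmentation S) where
  quasiIsoAt
    | 0 => by
      rw [ChainComplex.quasiIsoAt₀_iff, ShortComplex.quasiIso_iff_of_zeros' _
        ((twoTermComplex S.f).shape 0 0 (by simp)) rfl rfl]
      have hS' := ShortComplex.shortExact_of_iso (twoTermComplexIso S).symm hS
      exact ⟨hS'.exact, hS'.epi_g⟩
    | 1 => by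
      rw [quasiIsoAt_iff_exactAt' (hL := ChainComplex.exactAt_succ_single_obj ..),
        exactAt_iff' _ 2 1 0 (by simp) (by simp)]
      have hS' := ShortComplex.shortExact_of_iso (twoTermComplexIso S).symm hS
      exact (ShortComplex.exact_iff_mono _ ((isZero_twoTermComplex_X S.f 0).eq_of_src _ _)).2
        hS'.mono_f
    | n + 2 => by
      rw [quasiIsoAt_iff_exactAt' (hL := ChainComplex.exactAt_succ_single_obj ..)]
      exact .of_isZero (isZero_twoTermComplex_X S.f n)

/-- A short exact sequence `0 ⟶ X₁ ⟶ X₂ ⟶ X₃ ⟶ 0` with `X₁` and `X₂` projective, as a projective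
resolution of `X₃`. -/
noncomputable def twoTermResolution (hS : S.ShortExact) [Projective S.X₁] [Projective S.X₂] :
    ProjectiveResolution S.X₃ where
  complex := twoTermComplex S.f
  projective
    | 0 => .of_iso (doubleXIso₁ S.f _ one_ne_zero).symm ‹_›
    | 1 => .of_iso (doubleXIso₀ S.f _).symm ‹_›
    | n + 2 => (isZero_twoTermComplex_X S.f n).projective
  π := twoTermComplexAugmentation S
  quasiIso := quasiIso_twoTermComplexAugmentation hS

lemma isZero_leftDerived_obj_of_shortExact [HasProjectiveResolutions C] {D : Type*}
    [Category* D] [Abelian D] (F : C ⥤ D) [F.Additive] (hS : S.ShortExact)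
    [Projective S.X₁] [Projective S.X₂] (n : ℕ) :
    IsZero ((F.leftDerived (n + 2)).obj S.X₃) := by
  refine .of_iso ?_ ((twoTermResolution hS).isoLeftDerivedObj F (n + 2))
  erw [← exactAt_iff_isZero_homology]
  exact .of_isZero (F.map_isZero (isZero_twoTermComplex_X S.f n))

end TwoTermResolution

section InfiniteCyclic
open Representation

lemma coinvariantsKer_eq_range_sub_id {k G V : Type*} [CommRing k] [Group G] [AddCommGroup V]
    [Module k V] (ρ : Representation k G V) {g : G} (hg : ∀ x, x ∈ Subgroup.zpowers g) :
    Coinvariants.ker ρ = LinearMap.range (ρ g - LinearMap.id) := by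
  refine le_antisymm (Submodule.span_le.2 ?_) ?_
  · rintro _ ⟨⟨h, x⟩, rfl⟩
    obtain ⟨i, rfl⟩ := hg h
    have apply_sub_mem (i : ℤ) :
        ρ (g ^ (1 + i)) x - ρ (g ^ i) x ∈ LinearMap.range (ρ g - LinearMap.id) :=
      ⟨ρ (g ^ i) x, by rw [zpow_one_add, map_mul]; rfl⟩
    induction i with
    | zero => simp
    | succ n ih =>
      have := add_mem (apply_sub_mem n) ih
      rwa [sub_add_sub_cancel, add_comm] at this
    | pred n ih =>
      have := sub_mem ih (apply_sub_mem (-n - 1))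
      rwa [add_sub_cancel, sub_sub_sub_cancel_left] at this
  · rintro _ ⟨x, rfl⟩
    exact Coinvariants.sub_mem_ker g x

section Augmentation
variable (k G : Type u) [CommRing k] [Group G]

/-- The augmentation `k[G] ⟶ k`. -/
noncomputable abbrev augmentation : Rep.leftRegular k G ⟶ Rep.trivial k G k :=
  Rep.leftRegularHom (Rep.trivial k G k) (1 : k)

lemma augmentation_single (g : G) (r : k) :
    (augmentation k G).hom (MonoidAlgebra.single g r) = r := by
  simp

lemma ker_augmentation :
    LinearMap.ker (augmentation k G).hom.toLinearMap = Coinvariants.ker (leftRegular k G) := by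
  refine le_antisymm (fun x hx => ?_) (Submodule.span_le.2 ?_)
  · suffices x - .single 1 ((augmentation k G).hom x) ∈ Coinvariants.ker (leftRegular k G) by
      have hx' : (augmentation k G).hom x = 0 := hx
      rwa [hx', MonoidAlgebra.single_zero, sub_zero] at this
    clear hx
    induction x using MonoidAlgebra.induction_linear with
    | zero => simp
    | add x y hx hy =>
      rw [map_add, MonoidAlgebra.single_add, add_sub_add_comm]
      exact add_mem hx hy
    | single g r => exact Coinvariants.mem_ker_of_eq g (.single 1 r) _ (by simp)
  · rintro _ ⟨⟨g, x⟩, rfl⟩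
    have hom_comm := Rep.hom_comm_apply (augmentation k G) g x
    exact (map_sub _ _ _).trans (sub_eq_zero.2 hom_comm)

end Augmentation

variable {k G : Type u} [CommRing k] [CommGroup G]

lemma injective_leftRegular_sub_id [Infinite G] {g : G} (hg : ∀ x, x ∈ Subgroup.zpowers g) :
    Function.Injective
      (leftRegular k G g - LinearMap.id : MonoidAlgebra k G →ₗ[k] MonoidAlgebra k G) := by
  refine (injective_iff_map_eq_zero _).2 fun x hx => ?_
  have coeff_eq (γ : G) : x.coeff γ = x.coeff g :=
    coeff_of_leftRegular_of_generator g hg x (sub_eq_zero.1 hx) γ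
  obtain ⟨γ₀, hγ₀⟩ := Infinite.exists_notMem_finset x.coeff.support
  ext γ
  rw [coeff_eq γ, ← coeff_eq γ₀, Finsupp.notMem_support_iff.1 hγ₀]
  rfl

variable (k) in
/-- The complex `k[G] ⟶ k[G] ⟶ k` given by `g - 1` and the augmentation. -/
noncomputable def augmentationShortComplex (g : G) : ShortComplex (Rep k G) where
  f := Rep.applyAsHom (Rep.leftRegular k G) g - 𝟙 _
  g := augmentation k G
  zero := by
    rw [Preadditive.sub_comp, Rep.applyAsHom_comm, Category.id_comp, sub_eq_zero]
    exact Category.comp_id _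

lemma augmentationShortComplex_shortExact [Infinite G] {g : G}
    (hg : ∀ x, x ∈ Subgroup.zpowers g) : (augmentationShortComplex k g).ShortExact where
  exact := by
    apply (forget₂ (Rep k G) (ModuleCat k)).reflects_exact_of_faithful
    rw [ShortComplex.moduleCat_exact_iff_range_eq_ker]
    exact ((ker_augmentation k G).trans (coinvariantsKer_eq_range_sub_id _ hg)).symm
  mono_f := (Rep.mono_iff_injective _).2 (injective_leftRegular_sub_id hg)
  epi_g := (Rep.epi_iff_surjective _).2 fun r => ⟨.single 1 r, augmentation_single k G 1 r⟩

lemma isZero_groupHomology_of_infinite_of_generator [Infinite G] {g : G}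
    (hg : ∀ x, x ∈ Subgroup.zpowers g) (A : Rep.{u} k G) (n : ℕ) :
    IsZero (groupHomology A (n + 2)) := by
  classical
  have : Projective (augmentationShortComplex k g).X₁ := Rep.leftRegular_projective
  have : Projective (augmentationShortComplex k g).X₂ := Rep.leftRegular_projective
  exact (isZero_leftDerived_obj_of_shortExact ((Rep.coinvariantsTensor k G).obj A)
    (augmentationShortComplex_shortExact hg) n).of_iso (groupHomologyIsoTor A (n + 2))

lemma infinite_of_isMulTorsionFree (G : Type*) [Group G] [IsMulTorsionFree G] [Nontrivial G] :
    Infinite G := by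
  obtain ⟨g, hg⟩ := exists_ne (1 : G)
  exact .of_injective (fun n : ℕ => g ^ n)
    (injective_pow_iff_not_isOfFinOrder.2 (not_isOfFinOrder_of_isMulTorsionFree hg))

lemma isZero_groupHomology_of_isCyclic {G : Type u} [Group G] [IsCyclic G] [IsMulTorsionFree G]
    (A : Rep.{u} k G) (n : ℕ) : IsZero (groupHomology A (n + 2)) := by
  rcases subsingleton_or_nontrivial G with _ | _
  · exact isZero_groupHomology_succ_of_subsingleton A (n + 1)
  · have := infinite_of_isMulTorsionFree G
    let : CommGroup G := IsCyclic.commGroup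
    obtain ⟨g, hg⟩ := IsCyclic.exists_generator (α := G)
    exact isZero_groupHomology_of_infinite_of_generator hg A n

end InfiniteCyclic

section FinitelyGeneratedSubgroups
open groupHomology

variable {k G : Type u} [CommRing k] [Group G]

lemma isZero_groupHomology_iff (A : Rep.{u} k G) (n : ℕ) :
    IsZero (groupHomology A n) ↔
      ∀ z, (inhomogeneousChains A).d n ((ComplexShape.down ℕ).next n) z = 0 →
        ∃ w, (inhomogeneousChains A).d (n + 1) n w = z := by
  rw [groupHomology, ← HomologicalComplex.exactAt_iff_isZero_homology,
    HomologicalComplex.exactAt_iff' _ (n + 1) n _ (by simp) rfl, ShortComplex.moduleCat_exact_iff]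
  rfl

lemma mem_range_chainsMap_subtype (A : Rep.{u} k G) (H : Subgroup G) {n : ℕ}
    {z : (Fin n → G) →₀ A} (hz : ∀ v ∈ z.support, ∀ i, v i ∈ H) :
    z ∈ LinearMap.range ((chainsMap H.subtype (𝟙 (Rep.res H.subtype A))).f n).hom := by
  rw [← z.sum_single]
  refine Submodule.sum_mem _ fun v hv => ?_
  exact ⟨.single (fun i => ⟨v i, hz v hv i⟩) (z v), chainsMap_f_single ..⟩

lemma isZero_groupHomology_of_forall_fg (A : Rep.{u} k G) (n : ℕ)
    (h : ∀ H : Subgroup G, H.FG → IsZero (groupHomology (Rep.res H.subtype A) n)) :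
    IsZero (groupHomology A n) := by
  classical
  refine (isZero_groupHomology_iff A n).2 fun (z : (Fin n → G) →₀ A) hz => ?_
  let entries : Finset G := z.support.biUnion fun v => Finset.univ.image v
  let H := Subgroup.closure (entries : Set G)
  have mem_H (v) (hv : v ∈ z.support) (i) : v i ∈ H := Subgroup.subset_closure <|
    Finset.mem_biUnion.2 ⟨v, hv, Finset.mem_image_of_mem v (Finset.mem_univ i)⟩
  let φ := chainsMap H.subtype (𝟙 (Rep.res H.subtype A))
  obtain ⟨y, φ_y⟩ : ∃ y, φ.f n y = z := mem_range_chainsMap_subtype A H mem_H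
  have φ_injective (i : ℕ) : Function.Injective (φ.f i) :=
    (ModuleCat.mono_iff_injective _).1 (chainsMap_f_map_mono _ _ H.subtype_injective i)
  have φ_comm (i j : ℕ) := ConcreteCategory.congr_hom (φ.comm i j)
  have d_y : (inhomogeneousChains (Rep.res H.subtype A)).d n _ y = 0 :=
    φ_injective _ (((φ_comm n _ y).symm.trans ((congrArg _ φ_y).trans hz)).trans (map_zero _).symm)
  obtain ⟨w, d_w⟩ := (isZero_groupHomology_iff _ n).1 (h H ⟨entries, rfl⟩) y d_y
  exact ⟨φ.f (n + 1) w, (φ_comm (n + 1) n w).trans ((congrArg (φ.f n) d_w).trans φ_y)⟩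

end FinitelyGeneratedSubgroups

section UniversalCoefficients
open groupHomology

lemma exists_comp_eq_of_ker_le {k M N Q : Type*} [Ring k] [AddCommGroup M] [AddCommGroup N]
    [AddCommGroup Q] [Module k M] [Module k N] [Module k Q] (hQ : Module.Baer k Q) (d : M →ₗ[k] N)
    (c : M →ₗ[k] Q) (h : LinearMap.ker d ≤ LinearMap.ker c) : ∃ b : N →ₗ[k] Q, b ∘ₗ d = c := by
  obtain ⟨b, hb⟩ := hQ.extension_property ((LinearMap.ker d).liftQ d le_rfl)
    (LinearMap.ker_eq_bot.1 (Submodule.ker_liftQ_eq_bot _ _ _ le_rfl)) ((LinearMap.ker d).liftQ c h)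
  exact ⟨b, LinearMap.ext fun x => LinearMap.congr_fun hb (Submodule.Quotient.mk x)⟩

variable {k G M : Type u} [CommRing k] [Group G] [AddCommGroup M] [Module k M] {n : ℕ}

lemma linearCombination_inhomogeneousChains_d_single (c : (Fin n → G) → M) (g : Fin (n + 1) → G)
    (r : k) :
    Finsupp.linearCombination k c
        ((inhomogeneousChains.d (Rep.trivial k G k) n).hom (Finsupp.single g r)) =
      r • (inhomogeneousCochains.d (Rep.trivial k G M) n).hom c g := by
  refine (congrArg (Finsupp.linearCombination k c)
    (inhomogeneousChains.d_single (A := Rep.trivial k G k) n g r)).trans ?_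
  rw [inhomogeneousCochains.d_hom_apply, map_add, map_sum]
  simp only [map_smul, Finsupp.linearCombination_single, smul_add, Finset.smul_sum, smul_comm r]
  rfl

lemma linearCombination_inhomogeneousChains_d (c : (Fin n → G) → M)
    (z : (Fin (n + 1) → G) →₀ k) :
    Finsupp.linearCombination k c ((inhomogeneousChains.d (Rep.trivial k G k) n).hom z) =
      Finsupp.linearCombination k (M := M)
        ((inhomogeneousCochains.d (Rep.trivial k G M) n).hom c) z := by
  induction z using Finsupp.induction_linear with
  | zero => simp
  | add x y hx hy => rw [map_add, map_add, map_add, hx, hy]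
  | single g r =>
    rw [linearCombination_inhomogeneousChains_d_single, Finsupp.linearCombination_single]

lemma ker_inhomogeneousChains_d_le_ker_linearCombination
    (h : IsZero (groupHomology (Rep.trivial k G k) (n + 1))) {c : (Fin (n + 1) → G) → M}
    (hc : (inhomogeneousCochains.d (Rep.trivial k G M) (n + 1)).hom c = 0) :
    LinearMap.ker (inhomogeneousChains.d (Rep.trivial k G k) n).hom ≤
      LinearMap.ker (Finsupp.linearCombination k c) := by
  intro z hz
  rw [isZero_groupHomology_iff, ChainComplex.next_nat_succ, inhomogeneousChains.d_def,
    inhomogeneousChains.d_def] at h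
  obtain ⟨w, rfl⟩ := h z hz
  refine (linearCombination_inhomogeneousChains_d c w).trans ?_
  rw [hc]
  exact LinearMap.congr_fun (Finsupp.linearCombination_zero (M := M) _ k) w

lemma exists_inhomogeneousCochains_d_eq (hM : Module.Baer k M)
    (h : IsZero (groupHomology (Rep.trivial k G k) (n + 1))) {c : (Fin (n + 1) → G) → M}
    (hc : (inhomogeneousCochains.d (Rep.trivial k G M) (n + 1)).hom c = 0) :
    ∃ b, (inhomogeneousCochains.d (Rep.trivial k G M) n).hom b = c := by
  obtain ⟨f, hf⟩ := exists_comp_eq_of_ker_le hM (inhomogeneousChains.d (Rep.trivial k G k) n).hom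
    (Finsupp.linearCombination k c) (ker_inhomogeneousChains_d_le_ker_linearCombination h hc)
  let b (v : Fin n → G) : M := f (Finsupp.single v 1)
  have linearCombination_b : Finsupp.linearCombination k b = f := by ext v; simp [b]
  refine ⟨b, funext fun g => ?_⟩
  calc (inhomogeneousCochains.d (Rep.trivial k G M) n).hom b g
    _ = f ((inhomogeneousChains.d (Rep.trivial k G k) n).hom (Finsupp.single g 1)) := by
      rw [← linearCombination_b, linearCombination_inhomogeneousChains_d_single, one_smul]
    _ = Finsupp.linearCombination k c (Finsupp.single g 1) :=
      LinearMap.congr_fun hf (Finsupp.single g 1)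
    _ = c g := by simp

lemma isZero_groupCohomology_succ_iff (A : Rep.{u} k G) (n : ℕ) :
    IsZero (groupCohomology A (n + 1)) ↔
      ∀ c, (groupCohomology.inhomogeneousCochains A).d (n + 1) (n + 2) c = 0 →
        ∃ b, (groupCohomology.inhomogeneousCochains A).d n (n + 1) b = c := by
  rw [groupCohomology, ← HomologicalComplex.exactAt_iff_isZero_homology,
    HomologicalComplex.exactAt_iff' _ n (n + 1) (n + 2) (by simp) (by simp),
    ShortComplex.moduleCat_exact_iff]
  rfl

lemma subsingleton_groupCohomology_of_isZero_groupHomology (hM : Module.Baer k M)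
    (h : IsZero (groupHomology (Rep.trivial k G k) (n + 1))) :
    Subsingleton (groupCohomology (Rep.trivial k G M) (n + 1)) := by
  refine ModuleCat.subsingleton_of_isZero ?_
  rw [isZero_groupCohomology_succ_iff, groupCohomology.inhomogeneousCochains.d_def,
    groupCohomology.inhomogeneousCochains.d_def]
  exact fun c hc => exists_inhomogeneousCochains_d_eq hM h hc

end UniversalCoefficients

/-- A group is locally cyclic if its finitely generated subgroups are cyclic. -/
def IsLocallyCyclic (G : Type*) [Group G] : Prop :=
  ∀ H : Subgroup G, H.FG → IsCyclic H

section Localization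
variable {S : Type*} [CommRing S] [Algebra ℤ S]

lemma isMulTorsionFree_of_isLocalization (M : Submonoid ℤ) [IsLocalization M S] :
    IsMulTorsionFree (Multiplicative S) := by
  obtain rfl := Subsingleton.elim ‹Algebra ℤ S› (Ring.toIntAlgebra S)
  have := IsLocalization.flat S M
  have : IsAddTorsionFree S := Module.isTorsionFree_int_iff_isAddTorsionFree.1 inferInstance
  infer_instance

lemma isLocallyCyclic_of_isLocalization (M : Submonoid ℤ) [IsLocalization M S] :
    IsLocallyCyclic (Multiplicative S) := by
  classical
  rintro _ ⟨s, rfl⟩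
  obtain ⟨b, hb⟩ :=
    IsLocalization.exist_integer_multiples_of_finset M (s.image Multiplicative.toAdd)
  obtain ⟨u, hu⟩ := IsLocalization.map_units S b
  refine Subgroup.isCyclic_of_le (H' := Subgroup.zpowers (Multiplicative.ofAdd (↑u⁻¹ : S))) <|
    (Subgroup.closure_le _).2 fun x hx => ?_
  obtain ⟨m, hm⟩ := hb x.toAdd (Finset.mem_image_of_mem _ hx)
  refine ⟨m, congrArg Multiplicative.ofAdd (?_ : m • (↑u⁻¹ : S) = x.toAdd)⟩
  rw [zsmul_eq_mul, Units.mul_inv_eq_iff_eq_mul, hu, ← eq_intCast (algebraMap ℤ S), hm,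
    Algebra.smul_def, mul_comm]

end Localization

/-- The circle is divisible, being a quotient of `ℝ`. -/
noncomputable instance additiveCircleDivisibleBy : DivisibleBy (Additive Circle) ℤ :=
  have expHom_surjective : Function.Surjective Circle.expHom := fun z =>
    ⟨Complex.arg z.toMul, congrArg Additive.ofMul (Circle.exp_arg z.toMul)⟩
  expHom_surjective.divisibleBy _ fun x n => map_zsmul Circle.expHom n x

theorem padic_fractions_cohomology_vanishes_general {G : Type} [Group G] [IsMulTorsionFree G]
    (hG : IsLocallyCyclic G) (A : Type) [AddCommGroup A] [DivisibleBy A ℤ] {k : ℕ} (hk : 2 ≤ k) :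
    Subsingleton (groupCohomology (Rep.trivial ℤ G A) k) := by
  obtain ⟨n, rfl⟩ := Nat.exists_eq_add_of_le' hk
  refine subsingleton_groupCohomology_of_isZero_groupHomology (Module.Baer.of_divisible A) ?_
  refine isZero_groupHomology_of_forall_fg _ _ fun H hH => ?_
  have : IsCyclic H := hG H hH
  exact isZero_groupHomology_of_isCyclic _ n

/-- Section 4.3 of the paper.  For `G = ℤ[1/p]` (the group of `p`-adic
fractions) and every `k ≥ 2`, the group cohomology `H^k(G, U(1))` with trivial coefficients
vanishes. -/
theorem padic_fractions_cohomology_vanishes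
    (p : ℕ) (hp : p.Prime) (k : ℕ) (hk : 2 ≤ k) :
    Subsingleton
      (groupCohomology (Rep.trivial ℤ (PadicFractions p) (Additive Circle)) k) := by
  have := isMulTorsionFree_of_isLocalization (S := Localization.Away (p : ℤ)) (.powers (p : ℤ))
  exact padic_fractions_cohomology_vanishes_general
    (isLocallyCyclic_of_isLocalization (.powers (p : ℤ))) _ hk
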